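/- For every integer N ≥ 1, Q_AO⁻¹ · H_AO · Q_AO = J; i.e. the exceptional-point anharmonic-oscillator Hamiltonian H_AO is similar, via the explicit transition matrix Q_AO, to the nilpotent Jordan block J. -/

import Mathlib

/-!
The matrix `Q_AO = C P F` intertwines `J` with `H_AO` because each factor is an intertwiner:
`J` is carried by `F` to a weighted shift, by `P` to a tridiagonal matrix with integer entries, and
by `C` to `H_AO`. Row `m` of `P` lists the coefficients of `(1 + x) ^ a`, where `a = N - 1 - m`, so
the step for `P` compares coefficients in
`(m - a) (1 + x) ^ a + a (1 + x) ^ (a - 1) - m (1 + x) ^ (a + 1)`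
`= -x (m + a - x d/dx) (1 + x) ^ a`,
a relation among three neighbouring rows of Pascal's triangle. Reversing the rows of `P` gives a
lower unitriangular matrix, so `Q_AO` is invertible.
-/

open Matrix Polynomial Finset

/-- off-diagonal coupling `√((N−1−k)(k+1))`. -/
noncomputable def gCoup (N k : ℕ) : ℝ := Real.sqrt (((N - 1 - k) * (k + 1) : ℕ))

/-- the non-Hermitian Bose–Hubbard Hamiltonian `H_BH(z)`. -/
noncomputable def HBH (N : ℕ) (z : ℂ) : Matrix (Fin N) (Fin N) ℂ :=
  fun k l =>
    if (k : ℕ) = (l : ℕ) then -Complex.I * (((N : ℤ) - 1 - 2 * (k : ℕ) : ℤ) : ℂ) * z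
    else if (l : ℕ) = (k : ℕ) + 1 then (gCoup N k : ℂ)
    else if (k : ℕ) = (l : ℕ) + 1 then (gCoup N l : ℂ)
    else 0

/-- the EP limit of the discrete anharmonic-oscillator Hamiltonian `H_AO`. -/
noncomputable def HAO (N : ℕ) : Matrix (Fin N) (Fin N) ℂ :=
  fun k l =>
    if (k : ℕ) = (l : ℕ) then -(((N : ℤ) - 1 - 2 * (k : ℕ) : ℤ) : ℂ)
    else if (l : ℕ) = (k : ℕ) + 1 then (gCoup N k : ℂ)
    else if (k : ℕ) = (l : ℕ) + 1 then -(gCoup N l : ℂ)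
    else 0

/-- the nilpotent Jordan block `J`. -/
noncomputable def Jmat (N : ℕ) : Matrix (Fin N) (Fin N) ℂ :=
  fun k l => if (l : ℕ) = (k : ℕ) + 1 then 1 else 0

/-- the Pascal-triangle matrix `P`. -/
noncomputable def Pmat (N : ℕ) : Matrix (Fin N) (Fin N) ℂ :=
  fun m q => ((N - 1 - (m : ℕ)).choose (q : ℕ) : ℂ)

/-- the diagonal factor `D` with `D_{k,k} = i^k·√(binom(N−1,k))`. -/
noncomputable def Dmat (N : ℕ) : Matrix (Fin N) (Fin N) ℂ :=
  Matrix.diagonal fun k => Complex.I ^ (k : ℕ) * (Real.sqrt ((N - 1).choose (k : ℕ)) : ℂ)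

/-- the diagonal factor `G` with `G_{k,k} = (−i)^{N−1−k}·(N−1−k)!`. -/
noncomputable def Gmat (N : ℕ) : Matrix (Fin N) (Fin N) ℂ :=
  Matrix.diagonal fun k => (-Complex.I) ^ (N - 1 - (k : ℕ)) * ((N - 1 - (k : ℕ)).factorial : ℂ)

/-- the Bose–Hubbard transition matrix `Q_BH = D·P·G`. -/
noncomputable def QBH (N : ℕ) : Matrix (Fin N) (Fin N) ℂ := Dmat N * Pmat N * Gmat N

/-- the diagonal factor `C` with `C_{k,k} = √(binom(N−1,k))`. -/
noncomputable def Cmat (N : ℕ) : Matrix (Fin N) (Fin N) ℂ :=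
  Matrix.diagonal fun k => (Real.sqrt ((N - 1).choose (k : ℕ)) : ℂ)

/-- the diagonal factor `F` with `F_{k,k} = (−1)^{N−1−k}·(N−1−k)!`. -/
noncomputable def Fmat (N : ℕ) : Matrix (Fin N) (Fin N) ℂ :=
  Matrix.diagonal fun k => (-1 : ℂ) ^ (N - 1 - (k : ℕ)) * ((N - 1 - (k : ℕ)).factorial : ℂ)

/-- the anharmonic-oscillator transition matrix `Q_AO = C·P·F`. -/
noncomputable def QAO (N : ℕ) : Matrix (Fin N) (Fin N) ℂ := Cmat N * Pmat N * Fmat N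

/-- `β = −1 + i`. -/
noncomputable def betaC : ℂ := -1 + Complex.I

/-- the diagonal factor `B` with `B_{k,k} = (−β)^{−k}`. -/
noncomputable def Bmat (N : ℕ) : Matrix (Fin N) (Fin N) ℂ :=
  Matrix.diagonal fun k => ((-betaC) ^ (k : ℕ))⁻¹

/-- the diagonal factor `A` with `A_{k,k} = β^k`. -/
noncomputable def Amat (N : ℕ) : Matrix (Fin N) (Fin N) ℂ :=
  Matrix.diagonal fun k => betaC ^ (k : ℕ)

/-- the upper-triangular real matrix `R` with
`R_{n,n+q} = √(binom(n+q,n)·binom(N−1−n,q))`. -/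
noncomputable def Rmat (N : ℕ) : Matrix (Fin N) (Fin N) ℂ :=
  fun n k =>
    if (n : ℕ) ≤ (k : ℕ) then
      (Real.sqrt (((k : ℕ).choose (n : ℕ)) * ((N - 1 - (n : ℕ)).choose ((k : ℕ) - (n : ℕ)))) : ℂ)
    else 0

/-- the transition-matrix product `S = B·R·A`. -/
noncomputable def Smat (N : ℕ) : Matrix (Fin N) (Fin N) ℂ := Bmat N * Rmat N * Amat N

/-- the discrete anharmonic-oscillator Hamiltonian `H_AO(γ)` with coupling parameter `γ`. -/
noncomputable def HAOg (N : ℕ) (γ : ℝ) : Matrix (Fin N) (Fin N) ℝ :=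
  fun k l =>
    if (k : ℕ) = (l : ℕ) then -((N : ℝ) - 1 - 2 * (k : ℕ))
    else if (l : ℕ) = (k : ℕ) + 1 then
      Real.sqrt ((((N - 1 - (k : ℕ)) * ((k : ℕ) + 1) : ℕ)) * (1 - γ))
    else if (k : ℕ) = (l : ℕ) + 1 then
      -Real.sqrt ((((N - 1 - (l : ℕ)) * ((l : ℕ) + 1) : ℕ)) * (1 - γ))
    else 0

/-- the exchange (parity) matrix `Π`. -/
noncomputable def PiMat (N : ℕ) : Matrix (Fin N) (Fin N) ℂ :=
  fun k l => if (k : ℕ) + (l : ℕ) = N - 1 then 1 else 0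

/-- The tridiagonal matrix `C⁻¹ · H_AO · C` of size `n + 1`, whose entries are integers. -/
noncomputable def rescaledHAO (n : ℕ) : Matrix (Fin (n + 1)) (Fin (n + 1)) ℂ :=
  diagonal (fun m : Fin (n + 1) => (m : ℂ) - (n - m : ℕ)) +
    diagonal (fun m : Fin (n + 1) => ((n - m : ℕ) : ℂ)) * Jmat (n + 1) -
    diagonal (fun m : Fin (n + 1) => (m : ℂ)) * (Jmat (n + 1))ᵀ

/-- The weighted shift `F · J · F⁻¹` of size `n + 1`; its weights are the ratios of consecutive
entries of `F`. -/
noncomputable def weightedShift (n : ℕ) : Matrix (Fin (n + 1)) (Fin (n + 1)) ℂ :=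
  diagonal (fun q : Fin (n + 1) => -((n - q : ℕ) : ℂ)) * Jmat (n + 1)

section Shift

variable {ι : Type*} {n : ℕ}

lemma mul_Jmat_apply_zero (A : Matrix ι (Fin (n + 1)) ℂ) (i : ι) :
    (A * Jmat (n + 1)) i 0 = 0 := by
  simp [Matrix.mul_apply, Jmat]

lemma mul_Jmat_apply_succ (A : Matrix ι (Fin (n + 1)) ℂ) (i : ι) (k : Fin n) :
    (A * Jmat (n + 1)) i k.succ = A i k.castSucc := by
  have hJ (l : Fin (n + 1)) : Jmat (n + 1) l k.succ = if l = k.castSucc then 1 else 0 := by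
    simp [Jmat, Fin.ext_iff, eq_comm]
  simp [Matrix.mul_apply, hJ]

lemma Jmat_mul_apply_castSucc (A : Matrix (Fin (n + 1)) ι ℂ) (k : Fin n) (i : ι) :
    (Jmat (n + 1) * A) k.castSucc i = A k.succ i := by
  have hJ (l : Fin (n + 1)) : Jmat (n + 1) k.castSucc l = if l = k.succ then 1 else 0 := by
    simp [Jmat, Fin.ext_iff]
  simp [Matrix.mul_apply, hJ]

lemma Jmat_transpose_mul_apply (A : Matrix (Fin (n + 1)) ι ℂ) (k : Fin (n + 1)) (i : ι) :
    ((Jmat (n + 1))ᵀ * A) k i = (Aᵀ * Jmat (n + 1)) i k := by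
  rw [← transpose_apply (Aᵀ * Jmat (n + 1)), transpose_mul, transpose_transpose]

end Shift

lemma sqrt_mul_mul_sqrt_of_mul_eq_mul {x y a b : ℝ} (hx : 0 ≤ x) (hb : 0 ≤ b)
    (h : y * b = x * a) : √(x * y) * √b = x * √a :=
  calc √(x * y) * √b = √(x ^ 2 * a) := by rw [← Real.sqrt_mul' _ hb, mul_assoc, h]; ring_nf
    _ = x * √a := by rw [Real.sqrt_mul (sq_nonneg x), Real.sqrt_sq hx]

lemma cast_succ_mul_choose_succ (R : Type*) [CommSemiring R] (n k : ℕ) :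
    ((k + 1 : ℕ) : R) * n.choose (k + 1) = (n - k : ℕ) * n.choose k := by
  rw [← Nat.cast_mul, ← Nat.cast_mul, mul_comm, Nat.choose_succ_right_eq, mul_comm]

lemma gCoup_mul_sqrt_choose_succ (n k : ℕ) :
    gCoup (n + 1) k * √(n.choose (k + 1)) = (n - k : ℕ) * √(n.choose k) := by
  rw [gCoup, Nat.add_sub_cancel, Nat.cast_mul]
  exact sqrt_mul_mul_sqrt_of_mul_eq_mul (Nat.cast_nonneg _) (Nat.cast_nonneg _)
    (cast_succ_mul_choose_succ ℝ n k)

lemma gCoup_mul_sqrt_choose (n k : ℕ) :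
    gCoup (n + 1) k * √(n.choose k) = (k + 1 : ℕ) * √(n.choose (k + 1)) := by
  rw [gCoup, Nat.add_sub_cancel, Nat.cast_mul, mul_comm ((n - k : ℕ) : ℝ)]
  exact sqrt_mul_mul_sqrt_of_mul_eq_mul (Nat.cast_nonneg _) (Nat.cast_nonneg _)
    (cast_succ_mul_choose_succ ℝ n k).symm

lemma semiconjBy_Cmat (n : ℕ) : SemiconjBy (Cmat (n + 1)) (rescaledHAO n) (HAO (n + 1)) := by
  ext ⟨k, hk⟩ ⟨l, hl⟩
  simp only [Cmat, rescaledHAO, Matrix.mul_diagonal, Matrix.diagonal_mul, Matrix.add_apply,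
    Matrix.sub_apply, Matrix.diagonal_apply, transpose_apply, Jmat, HAO, Fin.mk.injEq,
    Nat.add_sub_cancel]
  rcases eq_or_ne k l with rfl | hkl
  · simp only [Nat.left_eq_add, one_ne_zero, if_true, if_false]
    push_cast [Nat.cast_sub (Nat.le_of_lt_succ hk)]
    ring
  rcases eq_or_ne l (k + 1) with rfl | hlk
  · have h : (gCoup (n + 1) k : ℂ) * √(n.choose (k + 1)) = (n - k : ℕ) * √(n.choose k) := by
      exact_mod_cast gCoup_mul_sqrt_choose_succ n k
    have hkl' : k ≠ k + 1 + 1 := by omega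
    simp only [hkl, hkl', if_true, if_false]
    linear_combination -h
  rcases eq_or_ne k (l + 1) with rfl | hkl'
  · have h : (gCoup (n + 1) l : ℂ) * √(n.choose l) = (l + 1 : ℕ) * √(n.choose (l + 1)) := by
      exact_mod_cast gCoup_mul_sqrt_choose n l
    simp only [hkl, hlk, if_true, if_false]
    linear_combination h
  · simp [hkl, hlk, hkl']

lemma mul_choose_pred (a k : ℕ) : a * (a - 1).choose k = (a - k) * a.choose k := by
  cases a with
  | zero => simp
  | succ a => rw [Nat.add_sub_cancel, mul_comm, Nat.choose_mul_succ_eq, mul_comm]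

section CommRing

variable (R : Type*) [CommRing R]

lemma cast_tsub_mul_choose (a k : ℕ) :
    ((a - k : ℕ) : R) * a.choose k = (a - k) * a.choose k := by
  obtain hk | hk := le_or_gt k a
  · rw [Nat.cast_sub hk]
  · simp [Nat.choose_eq_zero_of_lt hk]

lemma choose_succ_three_term (m a k : ℕ) :
    ((m : R) - a) * a.choose (k + 1) + a * (a - 1).choose (k + 1) - m * (a + 1).choose (k + 1) =
      -(m + a - k) * a.choose k := by
  have hpred : (a : R) * (a - 1).choose (k + 1) = (a - (k + 1)) * a.choose (k + 1) := by
    rw [← Nat.cast_mul, mul_choose_pred, Nat.cast_mul, cast_tsub_mul_choose, Nat.cast_succ]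
  have hsucc : ((k : R) + 1) * a.choose (k + 1) = (a - k) * a.choose k := by
    rw [← Nat.cast_succ, cast_succ_mul_choose_succ, cast_tsub_mul_choose]
  rw [Nat.choose_succ_succ, Nat.cast_add]
  linear_combination hpred - hsucc

end CommRing

lemma mul_Jmat_mul_Pmat_apply (n : ℕ) (m q : Fin (n + 1)) :
    ((n - m : ℕ) : ℂ) * (Jmat (n + 1) * Pmat (n + 1)) m q =
      (n - m : ℕ) * (n - m - 1 : ℕ).choose q := by
  cases m using Fin.lastCases with
  | last => simp
  | cast m => simp [Jmat_mul_apply_castSucc, Pmat, Nat.sub_sub]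

lemma mul_Jmat_transpose_mul_Pmat_apply (n : ℕ) (m q : Fin (n + 1)) :
    (m : ℂ) * ((Jmat (n + 1))ᵀ * Pmat (n + 1)) m q = m * (n - m + 1 : ℕ).choose q := by
  rw [Jmat_transpose_mul_apply]
  cases m using Fin.cases with
  | zero => simp
  | succ m =>
    have hm : n - m = n - (m + 1) + 1 := by omega
    simp [mul_Jmat_apply_succ, Pmat, hm]

lemma semiconjBy_Pmat (n : ℕ) : SemiconjBy (Pmat (n + 1)) (weightedShift n) (rescaledHAO n) := by
  ext m q
  have hrow : (rescaledHAO n * Pmat (n + 1)) m q =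
      (m - (n - m : ℕ)) * (n - m : ℕ).choose q + (n - m : ℕ) * (n - m - 1 : ℕ).choose q -
        m * (n - m + 1 : ℕ).choose q := by
    rw [← mul_Jmat_mul_Pmat_apply, ← mul_Jmat_transpose_mul_Pmat_apply]
    simp [rescaledHAO, Matrix.add_mul, Matrix.sub_mul, Matrix.mul_assoc, Matrix.diagonal_mul, Pmat]
  rw [hrow, weightedShift, ← Matrix.mul_assoc]
  cases q using Fin.cases with
  | zero => simp [mul_Jmat_apply_zero]
  | succ q =>
    have hm : (m : ℂ) + (n - m : ℕ) = n := by
      exact_mod_cast Nat.add_sub_cancel' m.is_le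
    rw [mul_Jmat_apply_succ, Matrix.mul_diagonal, Fin.val_succ, choose_succ_three_term, hm]
    simp [Pmat, Nat.cast_sub q.is_lt.le, mul_comm]

lemma semiconjBy_Fmat (n : ℕ) : SemiconjBy (Fmat (n + 1)) (Jmat (n + 1)) (weightedShift n) := by
  ext k q
  rw [Fmat, weightedShift, Matrix.mul_diagonal, Matrix.diagonal_mul, Matrix.diagonal_mul]
  by_cases hq : (q : ℕ) = k + 1
  · have hk : n - k = n - (k + 1) + 1 := by omega
    simp only [Jmat, hq, hk, if_true, Nat.add_sub_cancel, pow_succ, Nat.factorial_succ]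
    push_cast
    ring
  · simp [Jmat, hq]

lemma semiconjBy_QAO (n : ℕ) : SemiconjBy (QAO (n + 1)) (Jmat (n + 1)) (HAO (n + 1)) :=
  ((semiconjBy_Cmat n).mul_left (semiconjBy_Pmat n)).mul_left (semiconjBy_Fmat n)

lemma isUnit_Cmat (N : ℕ) : IsUnit (Cmat N) := by
  rw [Cmat, Matrix.isUnit_diagonal, Pi.isUnit_iff]
  intro k
  have h : 0 < (N - 1).choose k := Nat.choose_pos (by omega)
  simp [h.ne']

lemma isUnit_Pmat (N : ℕ) : IsUnit (Pmat N) := by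
  have hrev : (Pmat N).submatrix Fin.revPerm (Equiv.refl _) =
      Matrix.of fun i j : Fin N => ((i : ℕ).choose j : ℂ) := by
    ext i j
    have hi : N - 1 - (N - (i + 1)) = i := by omega
    simp [Pmat, hi]
  have hlower : (Matrix.of fun i j : Fin N => ((i : ℕ).choose j : ℂ)).IsLowerTriangular :=
    fun i j (hij : (i : ℕ) < j) => by simp [Nat.choose_eq_zero_of_lt hij]
  rw [← Matrix.isUnit_submatrix_equiv Fin.revPerm (Equiv.refl _), hrev,
    Matrix.isUnit_iff_isUnit_det, Matrix.det_of_isLowerTriangular _ hlower]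
  simp

lemma isUnit_Fmat (N : ℕ) : IsUnit (Fmat N) := by
  rw [Fmat, Matrix.isUnit_diagonal, Pi.isUnit_iff]
  simp [Nat.factorial_ne_zero]

lemma isUnit_QAO (N : ℕ) : IsUnit (QAO N) :=
  ((isUnit_Cmat N).mul (isUnit_Pmat N)).mul (isUnit_Fmat N)

/-- `Q_AO⁻¹ · H_AO · Q_AO = J`. -/
theorem ao_jordan_form (N : ℕ) (hN : 1 ≤ N) :
    (QAO N)⁻¹ * HAO N * QAO N = Jmat N := by
  obtain ⟨n, rfl⟩ := Nat.exists_eq_add_of_le' hN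
  have hdet := (Matrix.isUnit_iff_isUnit_det _).1 (isUnit_QAO (n + 1))
  rw [Matrix.mul_assoc, ← (semiconjBy_QAO n).eq, Matrix.nonsing_inv_mul_cancel_left _ _ hdet]
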